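/- Let x ∈ L²(Ω, ℝᵐ) and let v_1, …, v_p ∈ L²(Ω, ℝⁿ) be pairwise uncorrelated random vectors, i.e. 𝔼_{v_i v_j} = 0 for i ≠ j. Then for every f ∈ ℝᵐ and all matrices F_1, …, F_p ∈ ℝ^{m×n}: E[‖x − f − Σ_{k=1}^p F_k v_k‖²] = tr(𝔼_{xx}) − Σ_{k=1}^p ‖𝔼_{x v_k}(𝔼_{v_k v_k}^{1/2})^†‖² + ‖f − E[x] + Σ_{k=1}^p F_k E[v_k]‖² + Σ_{k=1}^p ‖F_k 𝔼_{v_k v_k}^{1/2} − 𝔼_{x v_k}(𝔼_{v_k v_k}^{1/2})^†‖², where ‖·‖ on matrices is the Frobenius norm and ‖·‖ on vectors is the Euclidean norm. -/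

import Mathlib

/-!
Write `W_k = F_k v_k` and `y = x - ∑ W_k`. Coordinatewise, the bias-variance identity
`E[(y_i - f_i)²] = Var(y_i) + (E[y_i] - f_i)²` (`integral_sub_const_sq`) produces the term in `f`.
As the `v_k` are pairwise uncorrelated, so are the `W_k`, and summing the variances gives
`tr 𝔼_xx - 2 ∑ tr(𝔼_{x v_k} F_kᵀ) + ∑ tr(F_k 𝔼_{v_k v_k} F_kᵀ)`.

It remains to complete the square for each `k`, with `S = 𝔼_vv^{1/2}` and `Q = S^†`. The cross term
matches because `𝔼_xv Q S = 𝔼_xv` (`cov_mul_mul_eq`): `1 - Q S` is annihilated by `S`, hence by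
`𝔼_vv`, and whatever `𝔼_vv` annihilates, `𝔼_xv` annihilates as well (`cov_mul_eq_zero`), since a
random variable of zero variance is almost surely constant and so uncorrelated with everything.
-/

open MeasureTheory Matrix BigOperators

noncomputable def vmean {Ω : Type*} [MeasurableSpace Ω] {n : ℕ} (μ : Measure Ω)
    (g : Ω → Fin n → ℝ) : Fin n → ℝ :=
  fun i => ∫ ω, g ω i ∂μ

/-- Cross-covariance matrix `𝔼_{gh} = E[g hᵀ] - E[g] E[h]ᵀ`. -/
noncomputable def cov {Ω : Type*} [MeasurableSpace Ω] {m n : ℕ} (μ : Measure Ω)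
    (g : Ω → Fin m → ℝ) (h : Ω → Fin n → ℝ) : Matrix (Fin m) (Fin n) ℝ :=
  Matrix.of fun i j => (∫ ω, g ω i * h ω j ∂μ) - (∫ ω, g ω i ∂μ) * (∫ ω, h ω j ∂μ)

/-- `g ∈ L²(Ω, ℝⁿ)`: measurable with `E[‖g‖²] < ∞`. -/
def MemL2 {Ω : Type*} [MeasurableSpace Ω] {n : ℕ} (μ : Measure Ω)
    (g : Ω → Fin n → ℝ) : Prop :=
  Measurable g ∧ Integrable (fun ω => ∑ i, (g ω i) ^ 2) μ

/-- `P` is the Moore–Penrose pseudoinverse of `M`. -/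
def IsMP {m n : ℕ} (M : Matrix (Fin m) (Fin n) ℝ) (P : Matrix (Fin n) (Fin m) ℝ) : Prop :=
  M * P * M = M ∧ P * M * P = P ∧ (M * P)ᵀ = M * P ∧ (P * M)ᵀ = P * M

/-- Squared Frobenius norm `‖M‖² = tr (M Mᵀ)`. -/
noncomputable def sqFrob {m n : ℕ} (M : Matrix (Fin m) (Fin n) ℝ) : ℝ :=
  Matrix.trace (M * Mᵀ)

/-- The error functional `J(f, F₁, …, F_p) = E[‖x - f - Σ_k F_k v_k‖²]`. -/
noncomputable def errJ {Ω : Type*} [MeasurableSpace Ω] {m n p : ℕ} (μ : Measure Ω)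
    (x : Ω → Fin m → ℝ) (v : Fin p → Ω → Fin n → ℝ) (f : Fin m → ℝ)
    (F : Fin p → Matrix (Fin m) (Fin n) ℝ) : ℝ :=
  ∫ ω, ∑ i, (x ω i - f i - ∑ k, (F k).mulVec (v k ω) i) ^ 2 ∂μ

section Helpers

variable {Ω : Type*} [MeasurableSpace Ω] {μ : Measure Ω} {m n p : ℕ}

lemma MemL2.memLp {g : Ω → Fin n → ℝ} (hg : MemL2 μ g) (i : Fin n) :
    MemLp (fun ω => g ω i) 2 μ := by
  have hmeas : ∀ i, Measurable fun ω => g ω i := fun i => (measurable_pi_apply i).comp hg.1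
  rw [memLp_two_iff_integrable_sq (hmeas i).aestronglyMeasurable]
  refine hg.2.mono' ((hmeas i).pow_const 2).aestronglyMeasurable (ae_of_all _ fun ω => ?_)
  rw [Real.norm_eq_abs, abs_of_nonneg (sq_nonneg _)]
  exact Finset.single_le_sum (f := fun i => (g ω i) ^ 2) (fun _ _ => sq_nonneg _)
    (Finset.mem_univ i)

lemma MemL2.memLp_mulVec {g : Ω → Fin n → ℝ} (hg : MemL2 μ g) (A : Matrix (Fin m) (Fin n) ℝ)
    (i : Fin m) : MemLp (fun ω => A.mulVec (g ω) i) 2 μ := by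
  simp only [Matrix.mulVec, dotProduct]
  exact memLp_finsetSum _ fun j _ => (hg.memLp j).const_mul _

lemma cov_apply [IsProbabilityMeasure μ] {g : Ω → Fin m → ℝ} {h : Ω → Fin n → ℝ}
    (hg : MemL2 μ g) (hh : MemL2 μ h) (i : Fin m) (j : Fin n) :
    cov μ g h i j
      = ProbabilityTheory.covariance (fun ω => g ω i) (fun ω => h ω j) μ := by
  rw [ProbabilityTheory.covariance_eq_sub (hg.memLp i) (hh.memLp j)]
  rfl

lemma covariance_mulVec_right [IsProbabilityMeasure μ] {g : Ω → Fin n → ℝ} (hg : MemL2 μ g)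
    {X : Ω → ℝ} (hX : MemLp X 2 μ) (A : Matrix (Fin m) (Fin n) ℝ) (i : Fin m) :
    ProbabilityTheory.covariance X (fun ω => A.mulVec (g ω) i) μ
      = ∑ j, A i j * ProbabilityTheory.covariance X (fun ω => g ω j) μ := by
  simp only [Matrix.mulVec, dotProduct]
  rw [ProbabilityTheory.covariance_fun_sum_right (fun j => (hg.memLp j).const_mul _) hX]
  simp only [ProbabilityTheory.covariance_const_mul_right]

/-- `𝔼_{x, A v} = 𝔼_{x v} Aᵀ`, entrywise. -/
lemma covariance_mulVec_eq [IsProbabilityMeasure μ] {x : Ω → Fin m → ℝ} (hx : MemL2 μ x)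
    {v : Ω → Fin n → ℝ} (hv : MemL2 μ v) (A : Matrix (Fin p) (Fin n) ℝ) (i : Fin m) (j : Fin p) :
    ProbabilityTheory.covariance (fun ω => x ω i) (fun ω => A.mulVec (v ω) j) μ
      = (cov μ x v * Aᵀ) i j := by
  rw [covariance_mulVec_right hv (hx.memLp i), Matrix.mul_apply]
  exact Finset.sum_congr rfl fun l _ => by rw [cov_apply hx hv, Matrix.transpose_apply, mul_comm]

/-- `𝔼_{A v, B w} = A 𝔼_{v w} Bᵀ`, entrywise. -/
lemma covariance_mulVec_mulVec [IsProbabilityMeasure μ] {v : Ω → Fin n → ℝ} (hv : MemL2 μ v)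
    {w : Ω → Fin p → ℝ} (hw : MemL2 μ w) (A : Matrix (Fin m) (Fin n) ℝ)
    {q : ℕ} (B : Matrix (Fin q) (Fin p) ℝ) (i : Fin m) (j : Fin q) :
    ProbabilityTheory.covariance (fun ω => A.mulVec (v ω) i) (fun ω => B.mulVec (w ω) j) μ
      = (A * cov μ v w * Bᵀ) i j := by
  rw [ProbabilityTheory.covariance_comm, covariance_mulVec_right hv (hw.memLp_mulVec B j),
    Matrix.mul_assoc, Matrix.mul_apply]
  exact Finset.sum_congr rfl fun l _ => by
    rw [ProbabilityTheory.covariance_comm, covariance_mulVec_eq hv hw]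

/-- Columns in the kernel of `𝔼_vv` lie in the kernel of `𝔼_xv`: for such a column `a` the variable
`aᵀ v` has zero variance, hence is almost surely constant. -/
lemma cov_mul_eq_zero [IsProbabilityMeasure μ] {x : Ω → Fin m → ℝ} (hx : MemL2 μ x)
    {v : Ω → Fin n → ℝ} (hv : MemL2 μ v) (P : Matrix (Fin n) (Fin p) ℝ)
    (hP : cov μ v v * P = 0) : cov μ x v * P = 0 := by
  ext i j
  have hmem := hv.memLp_mulVec Pᵀ j
  have hvar : ProbabilityTheory.variance (fun ω => Pᵀ.mulVec (v ω) j) μ = 0 := by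
    rw [← ProbabilityTheory.covariance_self hmem.aemeasurable, covariance_mulVec_mulVec hv hv,
      Matrix.transpose_transpose, Matrix.mul_assoc, hP, Matrix.mul_zero]
    rfl
  have hae := ProbabilityTheory.ae_eq_integral_of_variance_eq_zero hmem hvar
  have h := covariance_mulVec_eq hx hv Pᵀ i j
  rw [Matrix.transpose_transpose] at h
  rw [← h, ProbabilityTheory.covariance, Matrix.zero_apply]
  refine integral_eq_zero_of_ae ?_
  filter_upwards [hae] with ω hω
  rw [hω, sub_self, mul_zero]
  rfl

lemma cov_mul_mul_eq [IsProbabilityMeasure μ] {x : Ω → Fin m → ℝ} (hx : MemL2 μ x)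
    {v : Ω → Fin n → ℝ} (hv : MemL2 μ v) {S Q : Matrix (Fin n) (Fin n) ℝ}
    (hS : S * S = cov μ v v) (hQ : IsMP S Q) : cov μ x v * Q * S = cov μ x v := by
  have h := cov_mul_eq_zero hx hv (1 - Q * S) (by
    rw [← hS, Matrix.mul_assoc, Matrix.mul_sub S, ← Matrix.mul_assoc S Q S, hQ.1, Matrix.mul_one,
      sub_self, Matrix.mul_zero])
  rw [Matrix.mul_sub, Matrix.mul_one, sub_eq_zero, ← Matrix.mul_assoc] at h
  exact h.symm

/-- Completing the square, with `C` in the role of `𝔼_xv`. -/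
lemma sqFrob_sub_eq {S Q : Matrix (Fin n) (Fin n) ℝ} {C : Matrix (Fin m) (Fin n) ℝ}
    (hS : Sᵀ = S) (hC : C * Q * S = C) (F : Matrix (Fin m) (Fin n) ℝ) :
    sqFrob (F * S - C * Q)
      = trace (F * (S * S) * Fᵀ) - 2 * trace (C * Fᵀ) + sqFrob (C * Q) := by
  have h1 : (C * Q) * (F * S)ᵀ = C * Fᵀ := by
    rw [Matrix.transpose_mul, hS, ← Matrix.mul_assoc, hC]
  have h2 : trace ((F * S) * (C * Q)ᵀ) = trace (C * Fᵀ) := by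
    rw [← Matrix.trace_transpose, Matrix.transpose_mul, Matrix.transpose_transpose, h1]
  have h3 : (F * S) * (F * S)ᵀ = F * (S * S) * Fᵀ := by
    rw [Matrix.transpose_mul, hS]
    simp only [Matrix.mul_assoc]
  unfold sqFrob
  rw [Matrix.transpose_sub, Matrix.mul_sub, Matrix.sub_mul, Matrix.sub_mul, h1, h3]
  simp only [Matrix.trace_sub, h2]
  ring

lemma integral_sub_const_sq [IsProbabilityMeasure μ] {Y : Ω → ℝ} (hY : MemLp Y 2 μ) (c : ℝ) :
    ∫ ω, (Y ω - c) ^ 2 ∂μ = ProbabilityTheory.variance Y μ + (∫ ω, Y ω ∂μ - c) ^ 2 := by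
  have hYc : MemLp (fun ω => Y ω - c) 2 μ := hY.sub (memLp_const c)
  have h := ProbabilityTheory.variance_eq_sub hYc
  rw [ProbabilityTheory.variance_sub_const hY.aestronglyMeasurable,
    integral_sub (hY.integrable one_le_two) (integrable_const c)] at h
  simp only [integral_const, probReal_univ, one_smul, Pi.pow_apply] at h
  linarith

end Helpers

theorem error_decomposition_orthogonal
    {Ω : Type*} [MeasurableSpace Ω] (μ : Measure Ω) [IsProbabilityMeasure μ]
    {m n p : ℕ} (x : Ω → Fin m → ℝ) (hx : MemL2 μ x)
    (v : Fin p → Ω → Fin n → ℝ) (hv : ∀ k, MemL2 μ (v k))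
    (horth : ∀ i j, i ≠ j → cov μ (v i) (v j) = 0)
    (S : Fin p → Matrix (Fin n) (Fin n) ℝ)
    (hSpsd : ∀ k, (S k).PosSemidef)
    (hSsq : ∀ k, S k * S k = cov μ (v k) (v k))
    (Q : Fin p → Matrix (Fin n) (Fin n) ℝ)
    (hQ : ∀ k, IsMP (S k) (Q k)) :
    ∀ (f : Fin m → ℝ) (F : Fin p → Matrix (Fin m) (Fin n) ℝ),
      errJ μ x v f F
        = Matrix.trace (cov μ x x) - ∑ k, sqFrob (cov μ x (v k) * Q k)
          + ∑ i, (f i - vmean μ x i + ∑ k, (F k).mulVec (vmean μ (v k)) i) ^ 2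
          + ∑ k, sqFrob (F k * S k - cov μ x (v k) * Q k) := by
  intro f F
  have hW : ∀ k i, MemLp (fun ω => (F k).mulVec (v k ω) i) 2 μ :=
    fun k i => (hv k).memLp_mulVec (F k) i
  have hsumW : ∀ i, MemLp (fun ω => ∑ k, (F k).mulVec (v k ω) i) 2 μ :=
    fun i => memLp_finsetSum _ fun k _ => hW k i
  have hy : ∀ i, MemLp (fun ω => x ω i - ∑ k, (F k).mulVec (v k ω) i) 2 μ :=
    fun i => (hx.memLp i).sub (hsumW i)
  have hmean : ∀ i, ∫ ω, (x ω i - ∑ k, (F k).mulVec (v k ω) i) ∂μ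
      = vmean μ x i - ∑ k, (F k).mulVec (vmean μ (v k)) i := by
    intro i
    rw [integral_sub ((hx.memLp i).integrable one_le_two) ((hsumW i).integrable one_le_two),
      integral_finsetSum _ fun k _ => (hW k i).integrable one_le_two]
    congr 1
    refine Finset.sum_congr rfl fun k _ => ?_
    simp only [Matrix.mulVec, dotProduct, vmean]
    rw [integral_finsetSum _ fun j _ =>
      (((hv k).memLp j).integrable one_le_two).const_mul _]
    simp only [integral_const_mul]
  have hvar : ∀ i, ProbabilityTheory.variance
      (fun ω => x ω i - ∑ k, (F k).mulVec (v k ω) i) μ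
      = cov μ x x i i - 2 * ∑ k, (cov μ x (v k) * (F k)ᵀ) i i
        + ∑ k, (F k * (S k * S k) * (F k)ᵀ) i i := by
    intro i
    rw [ProbabilityTheory.variance_fun_sub (hx.memLp i) (hsumW i),
      ProbabilityTheory.covariance_fun_sum_right (fun k => hW k i) (hx.memLp i),
      ProbabilityTheory.variance_fun_sum (fun k => hW k i), cov_apply hx hx,
      ProbabilityTheory.covariance_self (hx.memLp i).aemeasurable]
    congr 1
    · simp only [covariance_mulVec_eq hx (hv _)]
    · refine Finset.sum_congr rfl fun k _ => ?_
      rw [Finset.sum_eq_single k, covariance_mulVec_mulVec (hv k) (hv k), hSsq]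
      · intro l _ hl
        rw [covariance_mulVec_mulVec (hv k) (hv l), horth k l hl.symm, Matrix.mul_zero,
          Matrix.zero_mul]
        rfl
      · simp
  have hJ : errJ μ x v f F = ∑ i, (ProbabilityTheory.variance
      (fun ω => x ω i - ∑ k, (F k).mulVec (v k ω) i) μ
      + (f i - vmean μ x i + ∑ k, (F k).mulVec (vmean μ (v k)) i) ^ 2) := by
    unfold errJ
    simp only [sub_right_comm (x _ _) (f _)]
    have hint : ∀ i, Integrable
        (fun ω => (x ω i - ∑ k, (F k).mulVec (v k ω) i - f i) ^ 2) μ :=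
      fun i => ((hy i).sub (memLp_const (f i))).integrable_sq
    rw [integral_finsetSum _ fun i _ => hint i]
    refine Finset.sum_congr rfl fun i _ => ?_
    rw [integral_sub_const_sq (hy i), hmean]
    ring
  have hsq : ∀ k, sqFrob (F k * S k - cov μ x (v k) * Q k)
      = trace (F k * (S k * S k) * (F k)ᵀ) - 2 * trace (cov μ x (v k) * (F k)ᵀ)
        + sqFrob (cov μ x (v k) * Q k) := fun k =>
    sqFrob_sub_eq (by simpa [Matrix.IsHermitian] using (hSpsd k).isHermitian)
      (cov_mul_mul_eq hx (hv k) (hSsq k) (hQ k)) (F k)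
  rw [hJ]
  simp only [hsq, hvar, Finset.sum_add_distrib, Finset.sum_sub_distrib, ← Finset.mul_sum]
  rw [Finset.sum_comm (f := fun i k => (cov μ x (v k) * (F k)ᵀ) i i),
    Finset.sum_comm (f := fun i k => (F k * (S k * S k) * (F k)ᵀ) i i)]
  simp only [Matrix.trace, Matrix.diag_apply]
  ring
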